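/- Let s ≥ 2 be an integer, let K > 0, and let B be a set of positive integers. For an integer N ≥ 3 with B(N) ≤ K·log N, call an integer n good for N if N/2 ≤ n ≤ N and |n − b| > (log N)^{4s} for every b ∈ B. For a positive integer n, let Ω_n be the collection of s-element sets ω of positive integers such that n − σ(ω) ∈ B, where σ(ω) is the sum of the elements of ω. Then there is a constant C depending only on s and K such that for all N ≥ 3 and all integers n, m that are good for N, Σ s^{-|ω∪ω'|} · ∏_{x∈ω∪ω'} x^{-1+1/s} ≤ C/log N, where the sum runs over all pairs (ω, ω') with ω ∈ Ω_n, ω' ∈ Ω_m, ω ≠ ω' and ω ∩ ω' ≠ ∅. -/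

import Mathlib

open Finset Filter

open scoped Classical

/-- The counting function `B(n) = |B ∩ [1, n]|` of a set of positive integers. -/
noncomputable def countB (B : Set ℕ) (n : ℕ) : ℕ := (B ∩ Set.Icc 1 n).ncard

/-!
Drop the factor `s ^ (-|ω ∪ ω'|)` and fix `b, b' ∈ B`, so that `ω` and `ω'` have prescribed sums
`u = n - b` and `v = m - b'`. Classify the pairs by `k = |ω ∩ ω'|`, where `1 ≤ k < s`, and by the
sum `t` of `ω ∩ ω'`. The weight of a pair factors over `ω ∩ ω'`, `ω \ ω'`, `ω' \ ω`, so a class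
contributes at most `W_k(t) W_{s-k}(u-t) W_{s-k}(v-t)`, where `W_k(t)` is the total weight of the
`k`-element sets with sum `t`. Discrete Beta-integral estimates give `W_k(t) ≪ t ^ (k/s - 1)`, and
then the sum over `t` is `≪ min(u, v) ^ (-θ)` for every `θ < 1/s`. Goodness of `n` and `m` yields
`min(u, v) ≥ (log N) ^ (4s)`; for `θ = 3/(4s)` each of the at most `(K log N) ^ 2` pairs `(b, b')`
contributes `≪ (log N) ^ (-3)`.
-/

section PowerSums

theorem mul_rpow_sub_one_le_rpow_sub_rpow {p t : ℝ} (hp : 0 ≤ p) (hp1 : p ≤ 1) (ht : 1 ≤ t) :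
    p * t ^ (p - 1) ≤ t ^ p - (t - 1) ^ p := by
  have ht0 : 0 < t := one_pos.trans_le ht
  have hinv : t⁻¹ ≤ 1 := inv_le_one_of_one_le₀ ht
  have bernoulli : (1 + -t⁻¹) ^ p ≤ 1 + p * -t⁻¹ :=
    rpow_one_add_le_one_add_mul_self (by linarith) hp hp1
  calc p * t ^ (p - 1) = t ^ p - t ^ p * (1 + p * -t⁻¹) := by
        rw [Real.rpow_sub_one ht0.ne']; ring
    _ ≤ t ^ p - t ^ p * (1 + -t⁻¹) ^ p := by gcongr
    _ = t ^ p - (t - 1) ^ p := by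
        rw [← Real.mul_rpow ht0.le (by linarith)]
        congr 2
        field_simp
        ring

theorem sum_Ico_rpow_sub_one_le {p : ℝ} (hp : 0 < p) (hp1 : p ≤ 1) (u : ℕ) :
    ∑ t ∈ Ico 1 u, (t : ℝ) ^ (p - 1) ≤ (u : ℝ) ^ p / p := by
  rw [le_div_iff₀' hp, mul_sum, sum_Ico_eq_sum_range]
  simp_rw [add_comm 1]
  calc ∑ i ∈ range (u - 1), p * ((i + 1 : ℕ) : ℝ) ^ (p - 1)
      ≤ ∑ i ∈ range (u - 1), (((i + 1 : ℕ) : ℝ) ^ p - (i : ℝ) ^ p) := by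
        refine sum_le_sum fun i _ => ?_
        have h := mul_rpow_sub_one_le_rpow_sub_rpow (t := (i + 1 : ℕ)) hp.le hp1 (by simp)
        rwa [Nat.cast_add_one, add_sub_cancel_right, ← Nat.cast_add_one] at h
    _ = ((u - 1 : ℕ) : ℝ) ^ p := by
        rw [sum_range_sub fun i : ℕ => (i : ℝ) ^ p, Nat.cast_zero, Real.zero_rpow hp.ne', sub_zero]
    _ ≤ (u : ℝ) ^ p := by gcongr; exact Nat.sub_le u 1

theorem rpow_sub_one_le_two_mul_of_half_le {p u x : ℝ} (hp : 0 ≤ p) (hp1 : p ≤ 1) (hu : 0 < u)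
    (hx : u / 2 ≤ x) : x ^ (p - 1) ≤ 2 * u ^ (p - 1) :=
  calc x ^ (p - 1) ≤ (u / 2) ^ (p - 1) :=
        Real.rpow_le_rpow_of_nonpos (by positivity) hx (by linarith)
    _ = 2 ^ (1 - p) * u ^ (p - 1) := by
        rw [Real.div_rpow hu.le zero_le_two, div_eq_inv_mul, ← Real.rpow_neg zero_le_two, neg_sub]
    _ ≤ 2 * u ^ (p - 1) := by
        gcongr
        exact Real.rpow_le_self_of_one_le one_le_two (by linarith)

/-- At least one of `t` and `u - t` is `≥ u / 2`, so one factor is comparable to a power of `u`. -/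
theorem rpow_mul_rpow_sub_le_add {p q u t : ℝ} (hp : 0 ≤ p) (hp1 : p ≤ 1) (hq : 0 ≤ q)
    (hq1 : q ≤ 1) (ht : 0 ≤ t) (htu : t ≤ u) (hu : 0 < u) :
    t ^ (p - 1) * (u - t) ^ (q - 1) ≤
      2 * u ^ (q - 1) * t ^ (p - 1) + 2 * u ^ (p - 1) * (u - t) ^ (q - 1) := by
  have htp : 0 ≤ t ^ (p - 1) := Real.rpow_nonneg ht _
  have huq : 0 ≤ (u - t) ^ (q - 1) := Real.rpow_nonneg (sub_nonneg.2 htu) _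
  rcases le_total t (u / 2) with hle | hge
  · have h := rpow_sub_one_le_two_mul_of_half_le (x := u - t) hq hq1 hu (by linarith)
    have hrest : 0 ≤ 2 * u ^ (p - 1) * (u - t) ^ (q - 1) := by positivity
    linarith [mul_le_mul_of_nonneg_right h htp]
  · have h := rpow_sub_one_le_two_mul_of_half_le hp hp1 hu hge
    have hrest : 0 ≤ 2 * u ^ (q - 1) * t ^ (p - 1) := by positivity
    linarith [mul_le_mul_of_nonneg_right h huq]

theorem sum_Ico_rpow_mul_rpow_sub_le {p q : ℝ} (hp : 0 < p) (hp1 : p ≤ 1) (hq : 0 < q)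
    (hq1 : q ≤ 1) (u : ℕ) :
    ∑ t ∈ Ico 1 u, (t : ℝ) ^ (p - 1) * ((u - t : ℕ) : ℝ) ^ (q - 1) ≤
      (2 / p + 2 / q) * (u : ℝ) ^ (p + q - 1) := by
  rcases u.eq_zero_or_pos with rfl | hu
  · rw [Ico_eq_empty_of_le zero_le_one, sum_empty]
    positivity
  have hu0 : (0 : ℝ) < u := by exact_mod_cast hu
  have reflect : ∑ t ∈ Ico 1 u, ((u - t : ℕ) : ℝ) ^ (q - 1) = ∑ t ∈ Ico 1 u, (t : ℝ) ^ (q - 1) := by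
    simpa using sum_Ico_reflect (fun t : ℕ => (t : ℝ) ^ (q - 1)) 1 (Nat.le_succ u)
  calc ∑ t ∈ Ico 1 u, (t : ℝ) ^ (p - 1) * ((u - t : ℕ) : ℝ) ^ (q - 1)
      ≤ ∑ t ∈ Ico 1 u, (2 * (u : ℝ) ^ (q - 1) * (t : ℝ) ^ (p - 1) +
          2 * (u : ℝ) ^ (p - 1) * ((u - t : ℕ) : ℝ) ^ (q - 1)) := by
        refine sum_le_sum fun t ht => ?_
        have htu : t ≤ u := (mem_Ico.1 ht).2.le
        rw [Nat.cast_sub htu]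
        exact rpow_mul_rpow_sub_le_add hp.le hp1 hq.le hq1 t.cast_nonneg (by exact_mod_cast htu) hu0
    _ = 2 * (u : ℝ) ^ (q - 1) * ∑ t ∈ Ico 1 u, (t : ℝ) ^ (p - 1) +
          2 * (u : ℝ) ^ (p - 1) * ∑ t ∈ Ico 1 u, (t : ℝ) ^ (q - 1) := by
        rw [sum_add_distrib, ← mul_sum, ← mul_sum, reflect]
    _ ≤ 2 * (u : ℝ) ^ (q - 1) * ((u : ℝ) ^ p / p) + 2 * (u : ℝ) ^ (p - 1) * ((u : ℝ) ^ q / q) := by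
        gcongr
        · exact sum_Ico_rpow_sub_one_le hp hp1 u
        · exact sum_Ico_rpow_sub_one_le hq hq1 u
    _ = (2 / p + 2 / q) * (u : ℝ) ^ (p + q - 1) := by
        rw [Real.rpow_sub_one hu0.ne', Real.rpow_sub_one hu0.ne', Real.rpow_sub_one hu0.ne',
          Real.rpow_add hu0]
        ring

theorem sum_Ico_rpow_mul_rpow_sub_mul_rpow_sub_le {p q c : ℝ} (hp : 0 < p) (hp1 : p ≤ 1)
    (hq : 0 < q) (hq1 : q ≤ 1) (hc : c ≤ 0) (hcq : 2 * c ≤ q - 1) (u v : ℕ) :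
    ∑ t ∈ Ico 1 (min u v),
        (t : ℝ) ^ (p - 1) * (((u - t : ℕ) : ℝ) ^ c * ((v - t : ℕ) : ℝ) ^ c) ≤
      (2 / p + 2 / q) * ((min u v : ℕ) : ℝ) ^ (p + q - 1) := by
  refine (sum_le_sum fun t ht => ?_).trans (sum_Ico_rpow_mul_rpow_sub_le hp hp1 hq hq1 (min u v))
  have htμ : 1 ≤ min u v - t := Nat.sub_pos_of_lt (mem_Ico.1 ht).2
  have hd : (1 : ℝ) ≤ ((min u v - t : ℕ) : ℝ) := by exact_mod_cast htμ
  have le_of_min_le : ∀ w, min u v ≤ w →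
      ((w - t : ℕ) : ℝ) ^ c ≤ ((min u v - t : ℕ) : ℝ) ^ c := fun w hw =>
    Real.rpow_le_rpow_of_nonpos (by linarith) (by gcongr) hc
  gcongr
  calc ((u - t : ℕ) : ℝ) ^ c * ((v - t : ℕ) : ℝ) ^ c
      ≤ ((min u v - t : ℕ) : ℝ) ^ c * ((min u v - t : ℕ) : ℝ) ^ c := by
        gcongr ?_ * ?_
        · exact le_of_min_le u (min_le_left u v)
        · exact le_of_min_le v (min_le_right u v)
    _ = ((min u v - t : ℕ) : ℝ) ^ (2 * c) := by rw [← Real.rpow_add (by linarith), two_mul]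
    _ ≤ ((min u v - t : ℕ) : ℝ) ^ (q - 1) := Real.rpow_le_rpow_of_exponent_le hd hcq

end PowerSums

theorem sum_le_sum_of_injOn {ι κ M : Type*} [AddCommMonoid M] [PartialOrder M]
    [IsOrderedAddMonoid M] {A : Finset ι} {B : Finset κ} {f : ι → M} {g : κ → M} (e : ι → κ)
    (maps : ∀ i ∈ A, e i ∈ B) (inj : Set.InjOn e A) (le : ∀ i ∈ A, f i ≤ g (e i))
    (nonneg : ∀ j ∈ B, 0 ≤ g j) : ∑ i ∈ A, f i ≤ ∑ j ∈ B, g j :=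
  calc ∑ i ∈ A, f i ≤ ∑ i ∈ A, g (e i) := sum_le_sum le
    _ = ∑ j ∈ A.image e, g j := (sum_image inj).symm
    _ ≤ ∑ j ∈ B, g j :=
        sum_le_sum_of_subset_of_nonneg (image_subset_iff.2 maps) fun j hj _ => nonneg j hj

section DistinctPartitions

/-- The partitions of `t` into `k` distinct parts: the `k`-element sets of positive integers with
sum `t`. -/
def distinctPartitions (k t : ℕ) : Finset (Finset ℕ) :=
  {ω ∈ powersetCard k (Icc 1 t) | ∑ x ∈ ω, x = t}

/-- The total weight of the partitions of `t` into `k` distinct parts, where a partition has weight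
`∏ f x` over its parts `x`. For `f x = x ^ (-1 + 1 / s) / s` this is the expected number of such
partitions inside a random set of pseudo `s`-th powers. -/
def partitionWeight (f : ℕ → ℝ) (k t : ℕ) : ℝ :=
  ∑ ω ∈ distinctPartitions k t, ∏ x ∈ ω, f x

variable {k t : ℕ} {ω τ : Finset ℕ}

theorem mem_distinctPartitions :
    ω ∈ distinctPartitions k t ↔ #ω = k ∧ (∀ x ∈ ω, 1 ≤ x) ∧ ∑ x ∈ ω, x = t := by
  rw [distinctPartitions, mem_filter, mem_powersetCard]
  constructor
  · rintro ⟨⟨hsub, hcard⟩, hsum⟩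
    exact ⟨hcard, fun x hx => (mem_Icc.1 (hsub hx)).1, hsum⟩
  · rintro ⟨hcard, hpos, rfl⟩
    have hle : ∀ x ∈ ω, x ≤ ∑ y ∈ ω, y := fun x hx =>
      single_le_sum (f := fun y => y) (fun _ _ => Nat.zero_le _) hx
    exact ⟨⟨fun x hx => mem_Icc.2 ⟨hpos x hx, hle x hx⟩, hcard⟩, rfl⟩

theorem mem_distinctPartitions_of_subset (hω : ω ∈ distinctPartitions k t) (hτ : τ ⊆ ω) :
    τ ∈ distinctPartitions #τ (∑ x ∈ τ, x) :=
  mem_distinctPartitions.2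
    ⟨rfl, fun x hx => (mem_distinctPartitions.1 hω).2.1 x (hτ hx), rfl⟩

theorem sdiff_mem_distinctPartitions (hω : ω ∈ distinctPartitions k t) (hτ : τ ⊆ ω) :
    ω \ τ ∈ distinctPartitions (k - #τ) (t - ∑ x ∈ τ, x) := by
  obtain ⟨hcard, hpos, hsum⟩ := mem_distinctPartitions.1 hω
  have hsplit : ∑ x ∈ ω \ τ, x + ∑ x ∈ τ, x = ∑ x ∈ ω, x := sum_sdiff hτ
  refine mem_distinctPartitions.2 ⟨?_, fun x hx => hpos x (sdiff_subset hx), by omega⟩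
  rw [card_sdiff_of_subset hτ, hcard]

theorem sum_lt_of_ssubset_of_mem_distinctPartitions (hω : ω ∈ distinctPartitions k t)
    (hτ : τ ⊂ ω) : ∑ x ∈ τ, x < t := by
  obtain ⟨-, hpos, rfl⟩ := mem_distinctPartitions.1 hω
  obtain ⟨x, hxω, hxτ⟩ := exists_of_ssubset hτ
  exact sum_lt_sum_of_subset hτ.subset hxω hxτ (hpos x hxω) fun _ _ _ => Nat.zero_le _

theorem sum_pos_of_subset_of_mem_distinctPartitions (hω : ω ∈ distinctPartitions k t)
    (hτ : τ ⊆ ω) (hne : τ.Nonempty) : 0 < ∑ x ∈ τ, x :=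
  sum_pos (fun x hx => (mem_distinctPartitions.1 hω).2.1 x (hτ hx)) hne

variable {f : ℕ → ℝ}

theorem partitionWeight_nonneg (hf : ∀ x, 0 ≤ f x) (k t : ℕ) : 0 ≤ partitionWeight f k t :=
  sum_nonneg fun _ _ => prod_nonneg fun x _ => hf x

/-- Split off an arbitrarily chosen part of each partition. -/
theorem partitionWeight_succ_le (hf : ∀ x, 0 ≤ f x) (hk : 1 ≤ k) (t : ℕ) :
    partitionWeight f (k + 1) t ≤ ∑ x ∈ Ico 1 t, f x * partitionWeight f k (t - x) := by
  have hne : ∀ ω ∈ distinctPartitions (k + 1) t, ∃ x, x ∈ ω := fun ω hω =>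
    card_pos.1 ((mem_distinctPartitions.1 hω).1 ▸ k.succ_pos)
  choose! part part_mem using hne
  simp_rw [partitionWeight, mul_sum, sum_sigma']
  refine sum_le_sum_of_injOn (fun ω => ⟨part ω, ω \ {part ω}⟩) (fun ω hω => ?_) ?_
    (fun ω hω => ?_) fun c _ => mul_nonneg (hf _) (prod_nonneg fun x _ => hf x)
  · have hsub : {part ω} ⊆ ω := singleton_subset_iff.2 (part_mem ω hω)
    have hssub : {part ω} ⊂ ω := by
      refine hsub.ssubset_of_ne fun h => ?_
      have hcard := congrArg card h
      rw [card_singleton, (mem_distinctPartitions.1 hω).1] at hcard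
      omega
    have hpos := sum_pos_of_subset_of_mem_distinctPartitions hω hsub (singleton_nonempty _)
    have hlt := sum_lt_of_ssubset_of_mem_distinctPartitions hω hssub
    have hrest := sdiff_mem_distinctPartitions hω hsub
    rw [sum_singleton] at hpos hlt hrest
    exact mem_sigma.2 ⟨mem_Ico.2 ⟨hpos, hlt⟩, hrest⟩
  · intro ω hω ω' hω' h
    obtain ⟨hpart, hrest⟩ := Sigma.mk.inj h
    rw [← sdiff_union_of_subset (singleton_subset_iff.2 (part_mem ω hω)), eq_of_heq hrest, hpart,
      sdiff_union_of_subset (singleton_subset_iff.2 (part_mem ω' hω'))]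
  · rw [sdiff_singleton_eq_erase, mul_prod_erase ω f (part_mem ω hω)]

theorem partitionWeight_one_le (hf : ∀ x, 0 ≤ f x) (t : ℕ) : partitionWeight f 1 t ≤ f t := by
  have hsub : distinctPartitions 1 t ⊆ {{t}} := by
    intro ω hω
    obtain ⟨hcard, -, hsum⟩ := mem_distinctPartitions.1 hω
    obtain ⟨x, rfl⟩ := card_eq_one.1 hcard
    rw [← hsum, sum_singleton, mem_singleton]
  calc partitionWeight f 1 t ≤ ∑ ω ∈ {{t}}, ∏ x ∈ ω, f x :=
        sum_le_sum_of_subset_of_nonneg hsub fun _ _ _ => prod_nonneg fun x _ => hf x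
    _ = f t := by rw [sum_singleton, prod_singleton]

theorem exists_partitionWeight_rpow_le {p : ℝ} (hp : 0 < p) {k : ℕ} (hk : 1 ≤ k)
    (hkp : k * p ≤ 1) :
    ∃ C : ℝ, 0 < C ∧ ∀ t : ℕ,
      partitionWeight (fun x => (x : ℝ) ^ (p - 1)) k t ≤ C * (t : ℝ) ^ (k * p - 1) := by
  have hf (x : ℕ) : 0 ≤ (x : ℝ) ^ (p - 1) := by positivity
  induction k, hk using Nat.le_induction with
  | base =>
    refine ⟨1, one_pos, fun t => ?_⟩
    rw [Nat.cast_one, one_mul, one_mul]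
    exact partitionWeight_one_le hf t
  | succ k hk ih =>
    have hk1 : (1 : ℝ) ≤ k := by exact_mod_cast hk
    rw [Nat.cast_add_one, add_one_mul] at hkp ⊢
    obtain ⟨C, hC, hW⟩ := ih (by linarith)
    refine ⟨C * (2 / p + 2 / (k * p)), by positivity, fun t => ?_⟩
    have hkp0 : 0 < k * p := by positivity
    calc partitionWeight (fun x => (x : ℝ) ^ (p - 1)) (k + 1) t
        ≤ ∑ x ∈ Ico 1 t, (x : ℝ) ^ (p - 1) *
            partitionWeight (fun x => (x : ℝ) ^ (p - 1)) k (t - x) :=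
          partitionWeight_succ_le hf hk t
      _ ≤ ∑ x ∈ Ico 1 t, (x : ℝ) ^ (p - 1) * (C * ((t - x : ℕ) : ℝ) ^ (k * p - 1)) := by
          gcongr with x
          exact hW (t - x)
      _ = C * ∑ x ∈ Ico 1 t, (x : ℝ) ^ (p - 1) * ((t - x : ℕ) : ℝ) ^ (k * p - 1) := by
          rw [mul_sum]
          exact sum_congr rfl fun x _ => by ring
      _ ≤ C * ((2 / p + 2 / (k * p)) * (t : ℝ) ^ (p + k * p - 1)) := by
          gcongr
          exact sum_Ico_rpow_mul_rpow_sub_le hp (by linarith) hkp0 (by linarith) t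
      _ = C * (2 / p + 2 / (k * p)) * (t : ℝ) ^ (k * p + p - 1) := by rw [add_comm p, mul_assoc]

end DistinctPartitions

section IntersectingPairs

/-- The pairs of distinct intersecting sets, the first one from `𝒜` and the second one from `ℬ`. -/
def intersectingPairs {α : Type*} [DecidableEq α] (𝒜 ℬ : Finset (Finset α)) :
    Finset (Finset α × Finset α) :=
  {p ∈ 𝒜 ×ˢ ℬ | p.1 ≠ p.2 ∧ (p.1 ∩ p.2).Nonempty}

theorem mem_intersectingPairs {α : Type*} [DecidableEq α] {𝒜 ℬ : Finset (Finset α)}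
    {p : Finset α × Finset α} :
    p ∈ intersectingPairs 𝒜 ℬ ↔ (p.1 ∈ 𝒜 ∧ p.2 ∈ ℬ) ∧ p.1 ≠ p.2 ∧ (p.1 ∩ p.2).Nonempty := by
  rw [intersectingPairs, mem_filter, mem_product]

theorem inter_ssubset_of_ne_of_card_le {α : Type*} [DecidableEq α] {ω τ : Finset α} (hne : ω ≠ τ)
    (hcard : #τ ≤ #ω) : ω ∩ τ ⊂ ω :=
  inter_subset_left.ssubset_of_ne fun h =>
    hne (eq_of_subset_of_card_le (inter_eq_left.1 h) hcard)

theorem prod_union_eq_prod_inter_mul {α M : Type*} [DecidableEq α] [CommMonoid M]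
    (ω τ : Finset α) (f : α → M) :
    ∏ x ∈ ω ∪ τ, f x = (∏ x ∈ ω ∩ τ, f x) * ((∏ x ∈ ω \ τ, f x) * ∏ x ∈ τ \ ω, f x) := by
  rw [← mul_assoc, prod_inter_mul_prod_sdiff, ← prod_union disjoint_sdiff,
    union_sdiff_self_eq_union]

theorem injective_inter_sdiff_sdiff {α : Type*} [DecidableEq α] :
    Function.Injective fun p : Finset α × Finset α => (p.1 ∩ p.2, p.1 \ p.2, p.2 \ p.1) := by
  rintro ⟨ω, τ⟩ ⟨ω', τ'⟩ h
  obtain ⟨hinter, hleft, hright⟩ : ω ∩ τ = ω' ∩ τ' ∧ ω \ τ = ω' \ τ' ∧ τ \ ω = τ' \ ω' := by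
    simpa only [Prod.mk.injEq] using h
  rw [Prod.mk.injEq]
  constructor
  · rw [← sdiff_union_inter ω τ, hleft, hinter, sdiff_union_inter]
  · rw [← sdiff_union_inter τ ω, inter_comm, hright, hinter, inter_comm, sdiff_union_inter]

variable {r u v : ℕ} {p : Finset ℕ × Finset ℕ}

theorem inter_ssubset_of_mem_intersectingPairs
    (hp : p ∈ intersectingPairs (distinctPartitions r u) (distinctPartitions r v)) :
    p.1 ∩ p.2 ⊂ p.1 ∧ p.1 ∩ p.2 ⊂ p.2 := by
  obtain ⟨⟨hω, hτ⟩, hne, -⟩ := mem_intersectingPairs.1 hp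
  have hcard : #p.1 = #p.2 :=
    (mem_distinctPartitions.1 hω).1.trans (mem_distinctPartitions.1 hτ).1.symm
  exact ⟨inter_ssubset_of_ne_of_card_le hne hcard.ge,
    inter_comm p.2 p.1 ▸ inter_ssubset_of_ne_of_card_le hne.symm hcard.le⟩

theorem card_inter_mem_Ico_of_mem_intersectingPairs
    (hp : p ∈ intersectingPairs (distinctPartitions r u) (distinctPartitions r v)) :
    #(p.1 ∩ p.2) ∈ Ico 1 r := by
  obtain ⟨⟨hω, -⟩, -, hinter⟩ := mem_intersectingPairs.1 hp
  have hcard : #p.1 = r := (mem_distinctPartitions.1 hω).1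
  exact mem_Ico.2 ⟨hinter.card_pos,
    hcard ▸ card_lt_card (inter_ssubset_of_mem_intersectingPairs hp).1⟩

theorem sum_inter_mem_Ico_of_mem_intersectingPairs
    (hp : p ∈ intersectingPairs (distinctPartitions r u) (distinctPartitions r v)) :
    ∑ x ∈ p.1 ∩ p.2, x ∈ Ico 1 (min u v) := by
  obtain ⟨⟨hω, hτ⟩, -, hinter⟩ := mem_intersectingPairs.1 hp
  obtain ⟨hsub, hsub'⟩ := inter_ssubset_of_mem_intersectingPairs hp
  exact mem_Ico.2 ⟨sum_pos_of_subset_of_mem_distinctPartitions hω hsub.subset hinter,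
    lt_min (sum_lt_of_ssubset_of_mem_distinctPartitions hω hsub)
      (sum_lt_of_ssubset_of_mem_distinctPartitions hτ hsub')⟩

theorem sum_intersectingPairs_card_inter_le {f : ℕ → ℝ} (hf : ∀ x, 0 ≤ f x) (r k u v : ℕ) :
    ∑ p ∈ intersectingPairs (distinctPartitions r u) (distinctPartitions r v) with #(p.1 ∩ p.2) = k,
        ∏ x ∈ p.1 ∪ p.2, f x ≤
      ∑ t ∈ Ico 1 (min u v), partitionWeight f k t *
        (partitionWeight f (r - k) (u - t) * partitionWeight f (r - k) (v - t)) := by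
  have hprod (ω : Finset ℕ) : 0 ≤ ∏ x ∈ ω, f x := prod_nonneg fun x _ => hf x
  have expand (t : ℕ) : partitionWeight f k t *
      (partitionWeight f (r - k) (u - t) * partitionWeight f (r - k) (v - t)) =
        ∑ c ∈ distinctPartitions k t ×ˢ distinctPartitions (r - k) (u - t) ×ˢ
          distinctPartitions (r - k) (v - t),
          (∏ x ∈ c.1, f x) * ((∏ x ∈ c.2.1, f x) * ∏ x ∈ c.2.2, f x) := by
    simp_rw [partitionWeight, sum_product, ← mul_sum, ← sum_mul]
  simp_rw [expand, sum_sigma']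
  refine sum_le_sum_of_injOn
    (fun p => ⟨∑ x ∈ p.1 ∩ p.2, x, (p.1 ∩ p.2, p.1 \ p.2, p.2 \ p.1)⟩) (fun p hp => ?_)
    (fun p _ p' _ h => injective_inter_sdiff_sdiff (eq_of_heq (Sigma.mk.inj h).2))
    (fun p _ => (prod_union_eq_prod_inter_mul p.1 p.2 f).le)
    fun c _ => mul_nonneg (hprod _) (mul_nonneg (hprod _) (hprod _))
  obtain ⟨hpair, rfl⟩ := mem_filter.1 hp
  obtain ⟨⟨hω, hτ⟩, -⟩ := mem_intersectingPairs.1 hpair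
  simp only [mem_sigma, mem_product]
  refine ⟨sum_inter_mem_Ico_of_mem_intersectingPairs hpair,
    mem_distinctPartitions_of_subset hω inter_subset_left, ?_, ?_⟩
  · simpa only [sdiff_inter_self_left] using sdiff_mem_distinctPartitions hω inter_subset_left
  · simpa only [sdiff_inter_self_right] using sdiff_mem_distinctPartitions hτ inter_subset_right

theorem exists_sum_intersectingPairs_card_inter_rpow_le {p θ : ℝ} {r k : ℕ} (hp : 0 < p)
    (hrp : r * p ≤ 1) (hθ : 0 ≤ θ) (hθp : θ < p) (hk : 1 ≤ k) (hkr : k < r) :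
    ∃ C : ℝ, 0 < C ∧ ∀ u v : ℕ,
      ∑ c ∈ intersectingPairs (distinctPartitions r u) (distinctPartitions r v)
          with #(c.1 ∩ c.2) = k,
        ∏ x ∈ c.1 ∪ c.2, (x : ℝ) ^ (p - 1) ≤ C * ((min u v : ℕ) : ℝ) ^ (-θ) := by
  set W := partitionWeight fun x => (x : ℝ) ^ (p - 1)
  have hf (x : ℕ) : 0 ≤ (x : ℝ) ^ (p - 1) := by positivity
  have hW0 : ∀ k t, 0 ≤ W k t := partitionWeight_nonneg hf
  have hcast : ((r - k : ℕ) : ℝ) = r - k := Nat.cast_sub hkr.le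
  have hkp : p ≤ k * p := le_mul_of_one_le_left hp.le (by exact_mod_cast hk)
  have hrkp : p ≤ ((r - k : ℕ) : ℝ) * p :=
    le_mul_of_one_le_left hp.le (by exact_mod_cast Nat.sub_pos_of_lt hkr)
  have hsplit : k * p + ((r - k : ℕ) : ℝ) * p = r * p := by rw [hcast]; ring
  obtain ⟨C₁, hC₁, hW₁⟩ := exists_partitionWeight_rpow_le hp hk (by linarith)
  obtain ⟨C₂, hC₂, hW₂⟩ :=
    exists_partitionWeight_rpow_le (k := r - k) hp (Nat.sub_pos_of_lt hkr) (by linarith)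
  -- The exponent `q` makes `k * p + q - 1`, the power of `min u v` below, equal to `-θ`.
  set q := 1 - k * p - θ with hq
  have hq0 : 0 < q := by linarith
  refine ⟨C₁ * C₂ ^ 2 * (2 / (k * p) + 2 / q), by positivity, fun u v => ?_⟩
  calc _ ≤ ∑ t ∈ Ico 1 (min u v), W k t * (W (r - k) (u - t) * W (r - k) (v - t)) :=
        sum_intersectingPairs_card_inter_le hf r k u v
    _ ≤ ∑ t ∈ Ico 1 (min u v), C₁ * (t : ℝ) ^ (k * p - 1) *
          (C₂ * ((u - t : ℕ) : ℝ) ^ (((r - k : ℕ) : ℝ) * p - 1) *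
            (C₂ * ((v - t : ℕ) : ℝ) ^ (((r - k : ℕ) : ℝ) * p - 1))) := by
        gcongr with t
        · exact mul_nonneg (hW0 _ _) (hW0 _ _)
        · exact hW₁ t
        · exact hW0 _ _
        · exact hW₂ (u - t)
        · exact hW₂ (v - t)
    _ = C₁ * C₂ ^ 2 * ∑ t ∈ Ico 1 (min u v), (t : ℝ) ^ (k * p - 1) *
          (((u - t : ℕ) : ℝ) ^ (((r - k : ℕ) : ℝ) * p - 1) *
            ((v - t : ℕ) : ℝ) ^ (((r - k : ℕ) : ℝ) * p - 1)) := by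
        rw [mul_sum]
        exact sum_congr rfl fun t _ => by ring
    _ ≤ C₁ * C₂ ^ 2 * ((2 / (k * p) + 2 / q) * ((min u v : ℕ) : ℝ) ^ (k * p + q - 1)) := by
        gcongr
        exact sum_Ico_rpow_mul_rpow_sub_mul_rpow_sub_le (by linarith) (by linarith) hq0
          (by linarith) (by linarith) (by linarith) u v
    _ = C₁ * C₂ ^ 2 * (2 / (k * p) + 2 / q) * ((min u v : ℕ) : ℝ) ^ (-θ) := by
        rw [mul_assoc, hq]
        ring_nf

theorem exists_sum_intersectingPairs_rpow_le {p θ : ℝ} {r : ℕ} (hp : 0 < p) (hrp : r * p ≤ 1)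
    (hθ : 0 ≤ θ) (hθp : θ < p) :
    ∃ C : ℝ, 0 < C ∧ ∀ u v : ℕ,
      ∑ c ∈ intersectingPairs (distinctPartitions r u) (distinctPartitions r v),
        ∏ x ∈ c.1 ∪ c.2, (x : ℝ) ^ (p - 1) ≤ C * ((min u v : ℕ) : ℝ) ^ (-θ) := by
  choose! C hC hbound using fun (k : ℕ) (hk : k ∈ Ico 1 r) =>
    exists_sum_intersectingPairs_card_inter_rpow_le hp hrp hθ hθp (mem_Ico.1 hk).1 (mem_Ico.1 hk).2
  have hsum : 0 ≤ ∑ k ∈ Ico 1 r, C k := sum_nonneg fun k hk => (hC k hk).le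
  refine ⟨∑ k ∈ Ico 1 r, C k + 1, by linarith, fun u v => ?_⟩
  rw [← sum_fiberwise_of_maps_to fun c => card_inter_mem_Ico_of_mem_intersectingPairs]
  calc _ ≤ ∑ k ∈ Ico 1 r, C k * ((min u v : ℕ) : ℝ) ^ (-θ) :=
        sum_le_sum fun k hk => hbound k hk u v
    _ = (∑ k ∈ Ico 1 r, C k) * ((min u v : ℕ) : ℝ) ^ (-θ) := (sum_mul _ _ _).symm
    _ ≤ (∑ k ∈ Ico 1 r, C k + 1) * ((min u v : ℕ) : ℝ) ^ (-θ) := by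
        gcongr
        linarith

end IntersectingPairs

section Representations

/-- The paper's family `Ω_n`: the `s`-element sets `ω` of positive integers with `n - σ(ω) ∈ B`.
The subtraction is truncated, which is harmless when `0 ∉ B`. -/
noncomputable def representations (s : ℕ) (B : Set ℕ) (n : ℕ) : Finset (Finset ℕ) :=
  {ω ∈ powersetCard s (Icc 1 n) | n - ω.sum id ∈ B}

variable {s n m : ℕ} {B : Set ℕ}

theorem mem_distinctPartitions_of_mem_representations {ω : Finset ℕ} {b : ℕ} (hb : 1 ≤ b)
    (hω : ω ∈ representations s B n) (hωb : n - ω.sum id = b) :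
    ω ∈ distinctPartitions s (n - b) := by
  obtain ⟨hsub, hcard⟩ := mem_powersetCard.1 (mem_filter.1 hω).1
  have hsum : ω.sum id = n - b := by omega
  exact mem_distinctPartitions.2 ⟨hcard, fun x hx => (mem_Icc.1 (hsub hx)).1, hsum⟩

theorem card_filter_mem_Icc_eq_countB (B : Set ℕ) (n : ℕ) :
    #{b ∈ Icc 1 n | b ∈ B} = countB B n := by
  rw [countB, ← Set.ncard_coe_finset, coe_filter]
  congr 1
  ext b
  simp only [mem_Icc, Set.mem_ofPred_eq, Set.mem_inter_iff, Set.mem_Icc]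
  exact and_comm

theorem countB_mono (B : Set ℕ) : Monotone (countB B) := fun _ N hnN =>
  Set.ncard_le_ncard (Set.inter_subset_inter_right B (Set.Icc_subset_Icc_right hnN))
    ((Set.finite_Icc 1 N).inter_of_right B)

/-- Classify the pairs by the two differences in `B`. -/
theorem sum_intersectingPairs_representations_le {f : ℕ → ℝ} (hf : ∀ x, 0 ≤ f x)
    (hB : ∀ b ∈ B, 1 ≤ b) {M : ℝ}
    (hM : ∀ b ∈ B, b ≤ n → ∀ b' ∈ B, b' ≤ m →
      ∑ c ∈ intersectingPairs (distinctPartitions s (n - b)) (distinctPartitions s (m - b')),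
        ∏ x ∈ c.1 ∪ c.2, f x ≤ M) :
    ∑ c ∈ intersectingPairs (representations s B n) (representations s B m), ∏ x ∈ c.1 ∪ c.2, f x ≤
      countB B n * countB B m * M := by
  have difference_mem {n : ℕ} {ω : Finset ℕ} (hω : ω ∈ representations s B n) :
      n - ω.sum id ∈ {b ∈ Icc 1 n | b ∈ B} := by
    have hmem : n - ω.sum id ∈ B := (mem_filter.1 hω).2
    exact mem_filter.2 ⟨mem_Icc.2 ⟨hB _ hmem, Nat.sub_le _ _⟩, hmem⟩
  have maps : ∀ c ∈ intersectingPairs (representations s B n) (representations s B m),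
      (n - c.1.sum id, m - c.2.sum id) ∈ {b ∈ Icc 1 n | b ∈ B} ×ˢ {b ∈ Icc 1 m | b ∈ B} :=
    fun c hc =>
      have hmem := (mem_intersectingPairs.1 hc).1
      mem_product.2 ⟨difference_mem hmem.1, difference_mem hmem.2⟩
  rw [← sum_fiberwise_of_maps_to maps, ← card_filter_mem_Icc_eq_countB B n,
    ← card_filter_mem_Icc_eq_countB B m, ← Nat.cast_mul, ← card_product, ← nsmul_eq_mul]
  refine sum_le_card_nsmul _ _ _ fun ⟨b, b'⟩ hbb' => ?_
  obtain ⟨⟨hbn, hbB⟩, hbm, hbB'⟩ : (b ∈ Icc 1 n ∧ b ∈ B) ∧ b' ∈ Icc 1 m ∧ b' ∈ B := by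
    simpa only [mem_product, mem_filter] using hbb'
  refine (sum_le_sum_of_subset_of_nonneg (fun c hc => ?_)
    fun _ _ _ => prod_nonneg fun x _ => hf x).trans
      (hM b hbB (mem_Icc.1 hbn).2 b' hbB' (mem_Icc.1 hbm).2)
  obtain ⟨hc, hdiff⟩ := mem_filter.1 hc
  obtain ⟨⟨hω, hω'⟩, hpair⟩ := mem_intersectingPairs.1 hc
  obtain ⟨hdiff₁, hdiff₂⟩ := Prod.mk.inj hdiff
  exact mem_intersectingPairs.2
    ⟨⟨mem_distinctPartitions_of_mem_representations (hB b hbB) hω hdiff₁,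
      mem_distinctPartitions_of_mem_representations (hB b' hbB') hω' hdiff₂⟩, hpair⟩

theorem exists_sum_intersectingPairs_representations_rpow_le {p θ : ℝ} {r : ℕ} (hp : 0 < p)
    (hrp : r * p ≤ 1) (hθ : 0 ≤ θ) (hθp : θ < p) :
    ∃ C : ℝ, 0 < C ∧ ∀ B : Set ℕ, (∀ b ∈ B, 1 ≤ b) → ∀ (T : ℝ) (n m : ℕ), 0 < T →
      (∀ b ∈ B, T ≤ |(n : ℝ) - b|) → (∀ b ∈ B, T ≤ |(m : ℝ) - b|) →
      ∑ c ∈ intersectingPairs (representations r B n) (representations r B m),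
        ∏ x ∈ c.1 ∪ c.2, (x : ℝ) ^ (p - 1) ≤ countB B n * countB B m * (C * T ^ (-θ)) := by
  obtain ⟨C, hC, hbound⟩ := exists_sum_intersectingPairs_rpow_le hp hrp hθ hθp
  refine ⟨C, hC, fun B hB T n m hT hn hm => ?_⟩
  refine sum_intersectingPairs_representations_le (fun x => by positivity) hB
    fun b hb hbn b' hb' hbm => (hbound _ _).trans ?_
  have gap {n b : ℕ} (hbn : b ≤ n) (h : T ≤ |(n : ℝ) - b|) : T ≤ ((n - b : ℕ) : ℝ) := by
    rwa [← Nat.cast_sub hbn, Nat.abs_cast] at h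
  have hmin : T ≤ ((min (n - b) (m - b') : ℕ) : ℝ) := by
    rw [Nat.cast_min]
    exact le_min (gap hbn (hn b hb)) (gap hbm (hm b' hb'))
  gcongr ?_ * ?_
  exact Real.rpow_le_rpow_of_nonpos hT hmin (neg_nonpos.2 hθ)

end Representations

theorem stmt_13_general (s : ℕ) (hs : 1 ≤ s) (K : ℝ) (hK : 0 < K) :
    ∃ C : ℝ, 0 < C ∧ ∀ B : Set ℕ, (∀ b ∈ B, 1 ≤ b) →
      ∀ N : ℕ, 2 ≤ N → (countB B N : ℝ) ≤ K * Real.log N →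
      ∀ n m : ℕ,
        (n ≤ N ∧ ∀ b ∈ B, (Real.log N) ^ (4 * s) < |(n : ℝ) - b|) →
        (m ≤ N ∧ ∀ b ∈ B, (Real.log N) ^ (4 * s) < |(m : ℝ) - b|) →
        ∑ p ∈ intersectingPairs (representations s B n) (representations s B m),
          ((s : ℝ) ^ (p.1 ∪ p.2).card)⁻¹ * ∏ x ∈ p.1 ∪ p.2, (x : ℝ) ^ (-1 + 1 / (s : ℝ)) ≤
        C / Real.log N := by
  have hs1 : (1 : ℝ) ≤ s := by exact_mod_cast hs
  have hs0 : (0 : ℝ) < s := by linarith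
  obtain ⟨C, hC, hbound⟩ := exists_sum_intersectingPairs_representations_rpow_le
    (p := 1 / (s : ℝ)) (θ := 3 / 4 * (1 / s)) (r := s) (by positivity)
    (mul_one_div_cancel hs0.ne').le (by positivity) (by linarith [one_div_pos.2 hs0])
  refine ⟨C * K ^ 2, by positivity, fun B hB N hN hcount n m ⟨hnN, hn⟩ ⟨hmN, hm⟩ => ?_⟩
  have hL : 0 < Real.log N := Real.log_pos (by exact_mod_cast hN)
  have hcount_le {n : ℕ} (hnN : n ≤ N) : (countB B n : ℝ) ≤ K * Real.log N :=
    (Nat.cast_le.2 (countB_mono B hnN)).trans hcount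
  have hpow : (Real.log N ^ (4 * s)) ^ (-(3 / 4 * (1 / (s : ℝ)))) = (Real.log N ^ 3)⁻¹ := by
    rw [← Real.rpow_natCast, ← Real.rpow_mul hL.le, ← Real.rpow_natCast, ← Real.rpow_neg hL.le]
    congr 1
    push_cast
    field_simp
  calc _ ≤ ∑ p ∈ intersectingPairs (representations s B n) (representations s B m),
          ∏ x ∈ p.1 ∪ p.2, (x : ℝ) ^ (1 / (s : ℝ) - 1) := by
        rw [neg_add_eq_sub]
        exact sum_le_sum fun p _ => mul_le_of_le_one_left (by positivity)
          (inv_le_one_of_one_le₀ (one_le_pow₀ hs1))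
    _ ≤ countB B n * countB B m * (C * (Real.log N ^ 3)⁻¹) :=
        hpow ▸ hbound B hB _ n m (by positivity) (fun b hb => (hn b hb).le)
          fun b hb => (hm b hb).le
    _ ≤ (K * Real.log N) * (K * Real.log N) * (C * (Real.log N ^ 3)⁻¹) := by
        gcongr
        · exact hcount_le hnN
        · exact hcount_le hmN
    _ = C * K ^ 2 / Real.log N := by field_simp

/-- Lemma 8 (Lemma `ij`): there is a constant `C` depending only on `s` and `K` such that,
for every set `B` of positive integers, every `N ≥ 3` with `B(N) ≤ K log N`, and all `n, m`
good for `N` (i.e. `N/2 ≤ n ≤ N` and `|n - b| > (log N)^{4s}` for every `b ∈ B`), the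
correlation sum over pairs `ω ∈ Ω_n`, `ω' ∈ Ω_m` with `ω ≠ ω'`, `ω ∩ ω' ≠ ∅` of
`s^{-|ω ∪ ω'|} ∏_{x ∈ ω ∪ ω'} x^{-1+1/s}` is at most `C / log N`, where `Ω_n` is the family
of `s`-element sets `ω` of positive integers with `n - σ(ω) ∈ B`. -/
theorem stmt_13 (s : ℕ) (hs : 2 ≤ s) (K : ℝ) (hK : 0 < K) :
    ∃ C : ℝ, 0 < C ∧ ∀ B : Set ℕ, (∀ b ∈ B, 1 ≤ b) →
      ∀ N : ℕ, 3 ≤ N → (countB B N : ℝ) ≤ K * Real.log N →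
      ∀ n m : ℕ,
        ((N : ℝ) / 2 ≤ n ∧ n ≤ N ∧ ∀ b ∈ B, (Real.log N) ^ (4 * s) < |(n : ℝ) - b|) →
        ((N : ℝ) / 2 ≤ m ∧ m ≤ N ∧ ∀ b ∈ B, (Real.log N) ^ (4 * s) < |(m : ℝ) - b|) →
        ∑ p ∈ (((Finset.powersetCard s (Finset.Icc 1 n)).filter
                (fun ω : Finset ℕ => n - ω.sum id ∈ B)) ×ˢ
              ((Finset.powersetCard s (Finset.Icc 1 m)).filter
                (fun ω : Finset ℕ => m - ω.sum id ∈ B))).filter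
            (fun p : Finset ℕ × Finset ℕ => p.1 ≠ p.2 ∧ (p.1 ∩ p.2).Nonempty),
          ((s : ℝ) ^ (p.1 ∪ p.2).card)⁻¹ * ∏ x ∈ p.1 ∪ p.2, (x : ℝ) ^ (-1 + 1 / (s : ℝ)) ≤
        C / Real.log N := by
  obtain ⟨C, hC, hbound⟩ := stmt_13_general s (one_le_two.trans hs) K hK
  exact ⟨C, hC, fun B hB N hN hcount n m hn hm =>
    hbound B hB N (Nat.le_of_succ_le hN) hcount n m hn.2 hm.2⟩
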